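/- Let u : ℝ × ℝ → ℝ be smooth and satisfy u_t = u²·u_xx at every point. Then the function Q := u²·(3u_x·u_xx + u·u_xxx) satisfies Q_t = u²·Q_xx + 2u·u_xx·Q at every point; that is, Q is a third-order generalized symmetry characteristic of u_t = u²u_xx. -/

import Mathlib

/-- Partial derivative with respect to the first (time) variable. -/
noncomputable def dt (u : ℝ → ℝ → ℝ) (t x : ℝ) : ℝ := deriv (fun s => u s x) t

/-- `n`-th partial derivative with respect to the second (space) variable. -/
noncomputable def dx (u : ℝ → ℝ → ℝ) (n : ℕ) (t x : ℝ) : ℝ := iteratedDeriv n (u t) x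

/-- Joint smoothness. -/
def Smo (f : ℝ → ℝ → ℝ) : Prop := ContDiff ℝ (⊤ : ℕ∞) fun p : ℝ × ℝ => f p.1 p.2

theorem Smo.hx {f : ℝ → ℝ → ℝ} (hf : Smo f) (t x : ℝ) :
    HasDerivAt (f t) (fderiv ℝ (fun p : ℝ × ℝ => f p.1 p.2) (t, x) (0, 1)) x := by
  have h1 : HasFDerivAt (fun p : ℝ × ℝ => f p.1 p.2) _ (t, x) :=
    ((hf.differentiable (by simp)) (t, x)).hasFDerivAt
  have h2 : HasDerivAt (fun y : ℝ => (t, y)) ((0 : ℝ), (1 : ℝ)) x :=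
    (hasDerivAt_const x t).prodMk (hasDerivAt_id x)
  exact h1.comp_hasDerivAt x h2

theorem Smo.ht {f : ℝ → ℝ → ℝ} (hf : Smo f) (t x : ℝ) :
    HasDerivAt (fun s => f s x) (fderiv ℝ (fun p : ℝ × ℝ => f p.1 p.2) (t, x) (1, 0)) t := by
  have h1 : HasFDerivAt (fun p : ℝ × ℝ => f p.1 p.2) _ (t, x) :=
    ((hf.differentiable (by simp)) (t, x)).hasFDerivAt
  have h2 : HasDerivAt (fun y : ℝ => (y, x)) ((1 : ℝ), (0 : ℝ)) t :=
    (hasDerivAt_id t).prodMk (hasDerivAt_const t x)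
  exact h1.comp_hasDerivAt t h2

theorem Smo.dx_eq {f : ℝ → ℝ → ℝ} (hf : Smo f) (t x : ℝ) :
    dx f 1 t x = fderiv ℝ (fun p : ℝ × ℝ => f p.1 p.2) (t, x) (0, 1) := by
  rw [dx, iteratedDeriv_one]; exact (hf.hx t x).deriv

theorem Smo.dt_eq {f : ℝ → ℝ → ℝ} (hf : Smo f) (t x : ℝ) :
    dt f t x = fderiv ℝ (fun p : ℝ × ℝ => f p.1 p.2) (t, x) (1, 0) := (hf.ht t x).deriv

theorem Smo.fd {f : ℝ → ℝ → ℝ} (hf : Smo f) :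
    ContDiff ℝ (⊤ : ℕ∞) (fderiv ℝ (fun p : ℝ × ℝ => f p.1 p.2)) :=
  hf.fderiv_right (by simp)

theorem Smo.dx1 {f : ℝ → ℝ → ℝ} (hf : Smo f) : Smo (dx f 1) := by
  have : (fun p : ℝ × ℝ => dx f 1 p.1 p.2) =
      fun p => fderiv ℝ (fun p : ℝ × ℝ => f p.1 p.2) p (0, 1) := by
    ext p; exact hf.dx_eq p.1 p.2
  rw [Smo, this]
  exact hf.fd.clm_apply contDiff_const

theorem Smo.dt1 {f : ℝ → ℝ → ℝ} (hf : Smo f) : Smo (dt f) := by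
  have : (fun p : ℝ × ℝ => dt f p.1 p.2) =
      fun p => fderiv ℝ (fun p : ℝ × ℝ => f p.1 p.2) p (1, 0) := by
    ext p; exact hf.dt_eq p.1 p.2
  rw [Smo, this]
  exact hf.fd.clm_apply contDiff_const

theorem dx_succ (f : ℝ → ℝ → ℝ) (n : ℕ) : dx f (n + 1) = dx (dx f n) 1 := by
  ext t x
  simp only [dx, iteratedDeriv_one, iteratedDeriv_succ]
  rfl

theorem Smo.dxn {f : ℝ → ℝ → ℝ} (hf : Smo f) (n : ℕ) : Smo (dx f n) := by
  induction n with
  | zero => simpa [Smo, dx] using hf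
  | succ n ih => rw [dx_succ]; exact ih.dx1

theorem Smo.hasx {f : ℝ → ℝ → ℝ} (hf : Smo f) (n : ℕ) (t x : ℝ) :
    HasDerivAt (fun y => dx f n t y) (dx f (n + 1) t x) x := by
  rw [dx_succ, (hf.dxn n).dx_eq]; exact (hf.dxn n).hx t x

theorem Smo.comm {f : ℝ → ℝ → ℝ} (hf : Smo f) (t x : ℝ) :
    dt (dx f 1) t x = dx (dt f) 1 t x := by
  rw [hf.dx1.dt_eq, hf.dt1.dx_eq]
  have e1 : (fun p : ℝ × ℝ => dx f 1 p.1 p.2) =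
      fun p => fderiv ℝ (fun p : ℝ × ℝ => f p.1 p.2) p (0, 1) := by
    ext p; exact hf.dx_eq p.1 p.2
  have e2 : (fun p : ℝ × ℝ => dt f p.1 p.2) =
      fun p => fderiv ℝ (fun p : ℝ × ℝ => f p.1 p.2) p (1, 0) := by
    ext p; exact hf.dt_eq p.1 p.2
  have hd : HasFDerivAt (fderiv ℝ (fun p : ℝ × ℝ => f p.1 p.2)) _ (t, x) :=
    (hf.fd.differentiable (by simp) (t, x)).hasFDerivAt
  rw [e1, e2, (hd.clm_apply (hasFDerivAt_const _ _)).fderiv,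
    (hd.clm_apply (hasFDerivAt_const _ _)).fderiv]
  have hs : IsSymmSndFDerivAt ℝ (fun p : ℝ × ℝ => f p.1 p.2) (t, x) :=
    ContDiffAt.isSymmSndFDerivAt (n := ((⊤ : ℕ∞) : WithTop ℕ∞)) hf.contDiffAt 
      (by simp only [minSmoothness_of_isRCLikeNormedField]; exact WithTop.coe_le_coe.2 (le_top : (2 : ℕ∞) ≤ ⊤))
  simpa using hs.eq (1, 0) (0, 1)

/-- Transport of a formula for the time derivative one order up. -/
theorem Smo.up {f : ℝ → ℝ → ℝ} (hf : Smo f) (n : ℕ) (G : ℝ → ℝ → ℝ) (c t x : ℝ)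
    (hG : ∀ t x, dt (dx f n) t x = G t x) (h : HasDerivAt (G t) c x) :
    dt (dx f (n + 1)) t x = c := by
  rw [dx_succ, (hf.dxn n).comm, dx, iteratedDeriv_one, ← h.deriv]
  congr 1
  ext y; exact hG t y

theorem Smo.hast {f : ℝ → ℝ → ℝ} (hf : Smo f) (t x : ℝ) :
    HasDerivAt (fun s => f s x) (dt f t x) t := by
  rw [hf.dt_eq]; exact hf.ht t x

theorem stmt_12 (u : ℝ → ℝ → ℝ) (hu : ContDiff ℝ (⊤ : ℕ∞) fun p : ℝ × ℝ => u p.1 p.2)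
    (heq : ∀ t x, dt u t x = (u t x) ^ 2 * dx u 2 t x)
    (Q : ℝ → ℝ → ℝ)
    (hQ : ∀ t x, Q t x = (u t x) ^ 2 * (3 * dx u 1 t x * dx u 2 t x + u t x * dx u 3 t x)) :
    ∀ t x, dt Q t x = (u t x) ^ 2 * dx Q 2 t x + 2 * u t x * dx u 2 t x * Q t x := by
  have hs : Smo u := hu
  have h0 : ∀ t x, HasDerivAt (fun y => u t y) (dx u 1 t x) x := by
    intro t x
    have := hs.hasx 0 t x
    simpa [dx] using this
  have h1 := hs.hasx 1
  have h2 := hs.hasx 2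
  have h3 := hs.hasx 3
  have h4 := hs.hasx 4
  norm_num at h1 h2 h3 h4
  have z : dx u 0 = u := by ext t x; simp [dx]
  have T1 : ∀ t x, dt (dx u 1) t x = 2 * u t x * dx u 1 t x * dx u 2 t x
      + u t x ^ 2 * dx u 3 t x := by
    intro t x
    refine hs.up 0 (fun t x => (u t x) ^ 2 * dx u 2 t x) _ t x (by rw [z]; exact heq) ?_
    refine (((h0 t x).fun_pow 2).fun_mul (h2 t x)).congr_deriv ?_
    push_cast; ring
  have T2 : ∀ t x, dt (dx u 2) t x = 2 * dx u 1 t x ^ 2 * dx u 2 t x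
      + 2 * u t x * dx u 2 t x ^ 2 + 4 * u t x * dx u 1 t x * dx u 3 t x
      + u t x ^ 2 * dx u 4 t x := by
    intro t x
    refine hs.up 1 (fun t x => 2 * u t x * dx u 1 t x * dx u 2 t x
      + u t x ^ 2 * dx u 3 t x) _ t x T1 ?_
    refine (((((h0 t x).const_mul 2).fun_mul (h1 t x)).fun_mul (h2 t x)).fun_add
      (((h0 t x).fun_pow 2).fun_mul (h3 t x))).congr_deriv ?_
    push_cast; ring
  have T3 : ∀ t x, dt (dx u 3) t x = 6 * dx u 1 t x * dx u 2 t x ^ 2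
      + 6 * dx u 1 t x ^ 2 * dx u 3 t x + 8 * u t x * dx u 2 t x * dx u 3 t x
      + 6 * u t x * dx u 1 t x * dx u 4 t x + u t x ^ 2 * dx u 5 t x := by
    intro t x
    refine hs.up 2 _ _ t x T2 ?_
    refine ((((((((h1 t x).fun_pow 2).const_mul 2).fun_mul (h2 t x)).fun_add
      (((h0 t x).const_mul 2).fun_mul ((h2 t x).fun_pow 2))).fun_add
      ((((h0 t x).const_mul 4).fun_mul (h1 t x)).fun_mul (h3 t x))).fun_add
      (((h0 t x).fun_pow 2).fun_mul (h4 t x)))).congr_deriv ?_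
    push_cast; ring
  have hQ' : Q = fun t x => (u t x) ^ 2 * (3 * dx u 1 t x * dx u 2 t x + u t x * dx u 3 t x) := by
    ext t x; exact hQ t x
  have X1 : ∀ t x, HasDerivAt (Q t) (5 * u t x ^ 2 * dx u 1 t x * dx u 3 t x
      + u t x * dx u 1 t x * (6 * dx u 1 t x * dx u 2 t x) + 3 * u t x ^ 2 * dx u 2 t x ^ 2
      + u t x ^ 2 * dx u 1 t x * dx u 3 t x + u t x ^ 3 * dx u 4 t x) x := by
    intro t x
    rw [hQ']
    refine (((h0 t x).fun_pow 2).fun_mul ((((h1 t x).const_mul 3).fun_mul (h2 t x)).fun_add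
      ((h0 t x).fun_mul (h3 t x)))).congr_deriv ?_
    push_cast; ring
  have X2 : ∀ t x, dx Q 2 t x = 6 * dx u 1 t x ^ 3 * dx u 2 t x
      + 18 * u t x * dx u 1 t x * dx u 2 t x ^ 2 + 18 * u t x * dx u 1 t x ^ 2 * dx u 3 t x
      + 12 * u t x ^ 2 * dx u 2 t x * dx u 3 t x + 9 * u t x ^ 2 * dx u 1 t x * dx u 4 t x
      + u t x ^ 3 * dx u 5 t x := by
    intro t x
    have e : deriv (Q t) = fun x => 6 * u t x ^ 2 * dx u 1 t x * dx u 3 t x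
      + 6 * u t x * dx u 1 t x ^ 2 * dx u 2 t x + 3 * u t x ^ 2 * dx u 2 t x ^ 2
      + u t x ^ 3 * dx u 4 t x := by
      ext y; rw [(X1 t y).deriv]; ring
    rw [dx, iteratedDeriv_succ, iteratedDeriv_one, e]
    refine HasDerivAt.deriv ?_
    refine (((((((h0 t x).fun_pow 2).const_mul 6).fun_mul (h1 t x)).fun_mul (h3 t x)).fun_add
      ((((h0 t x).const_mul 6).fun_mul ((h1 t x).fun_pow 2)).fun_mul (h2 t x))).fun_add
      ((((h0 t x).fun_pow 2).const_mul 3).fun_mul ((h2 t x).fun_pow 2))).fun_add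
      (((h0 t x).fun_pow 3).fun_mul (h4 t x)) |>.congr_deriv ?_
    push_cast; ring
  intro t x
  have t0 := hs.hast t x
  have t1 := (hs.dxn 1).hast t x
  have t2 := (hs.dxn 2).hast t x
  have t3 := (hs.dxn 3).hast t x
  rw [X2, hQ, dt, hQ']
  rw [((t0.fun_pow 2).fun_mul (((t1.const_mul 3).fun_mul t2).fun_add
      (t0.fun_mul t3))).deriv, heq, T1, T2, T3]
  push_cast; ring
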